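/- In the canonical lift, the p-torsion subgroup of Ẽ(K[ε]) equals the direct sum E[p] ⊕ Θ; in particular, since E is ordinary, Ẽ(K[ε])[p] ≅ ℤ/pℤ × K⁺. -/

import Mathlib

noncomputable section
open scoped Classical

/-- The inclusion `K → K[ε]` of the base ring into the dual numbers. -/
abbrev ιD {K : Type*} [CommRing K] (a : K) : DualNumber K := TrivSqZeroExt.inl a

/-- The element `ε` of the dual numbers `K[ε]`. -/
abbrev εD (K : Type*) [CommRing K] : DualNumber K := DualNumber.eps

/-- A projective coordinate triple `(X, Y, Z)`. -/
abbrev Pt (R : Type*) := R × R × R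

/-- The projective Weierstrass equation `Y²Z = X³ + A·XZ² + B·Z³` for the curve
`y² = x³ + Ax + B`. -/
def OnCurve {R : Type*} [CommRing R] (A B : R) (P : Pt R) : Prop :=
  P.2.1 ^ 2 * P.2.2 = P.1 ^ 3 + A * P.1 * P.2.2 ^ 2 + B * P.2.2 ^ 3

/-- The standard projective addition law on the Weierstrass curve
`y² = x³ + Ax + B`, written via the complete addition formulas
(valid over any commutative ring, agreeing with the usual chord–tangent law). -/
def padd {R : Type*} [CommRing R] (A B : R) (P Q : Pt R) : Pt R :=
  let X1 := P.1; let Y1 := P.2.1; let Z1 := P.2.2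
  let X2 := Q.1; let Y2 := Q.2.1; let Z2 := Q.2.2
  let b3 := 3 * B
  ((X1 * Y2 + X2 * Y1) * (Y1 * Y2 - A * (X1 * Z2 + X2 * Z1) - b3 * Z1 * Z2)
      - (Y1 * Z2 + Y2 * Z1) * (A * X1 * X2 + b3 * (X1 * Z2 + X2 * Z1) - A ^ 2 * Z1 * Z2),
    (3 * X1 * X2 + A * Z1 * Z2) * (A * X1 * X2 + b3 * (X1 * Z2 + X2 * Z1) - A ^ 2 * Z1 * Z2)
      + (Y1 * Y2 + A * (X1 * Z2 + X2 * Z1) + b3 * Z1 * Z2)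
        * (Y1 * Y2 - A * (X1 * Z2 + X2 * Z1) - b3 * Z1 * Z2),
    (Y1 * Z2 + Y2 * Z1) * (Y1 * Y2 + A * (X1 * Z2 + X2 * Z1) + b3 * Z1 * Z2)
      + (X1 * Y2 + X2 * Y1) * (3 * X1 * X2 + A * Z1 * Z2))

/-- The `n`-fold sum `n • P` on the curve, starting from the identity `(0 : 1 : 0)`. -/
def pmul {R : Type*} [CommRing R] (A B : R) (n : ℕ) (P : Pt R) : Pt R :=
  (fun Q => padd A B Q P)^[n] (0, 1, 0)

/-- Equality of projective points: the coordinates agree up to a unit scalar. -/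
def ProjEq {R : Type*} [CommRing R] (P Q : Pt R) : Prop :=
  ∃ u : Rˣ, Q = ((u : R) * P.1, (u : R) * P.2.1, (u : R) * P.2.2)

/-- The point at infinity `O_k = (kε : 1 : 0)` of the lift of the curve to `K[ε]`. -/
def Oinf {K : Type*} [CommRing K] (k : K) : Pt (DualNumber K) :=
  (ιD k * εD K, 1, 0)

/-!
The addition law `padd` computes `P + Q` whenever `P - Q` does not have order two, so on points of
odd order it is the group law. A point over `K[ε]` is a point of `E` with a tangent vector, and
adding `O_k` moves `P` by `k` times the translation-invariant vector field of `E`. Invariance gives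
`(P + O_k) + (Q + O_l) = (P + Q) + O_{k+l}`, hence `p(P + O_k) = pP + O_{pk} = pP`, while smoothness
of `E` says that every tangent vector is a multiple of the invariant one, so every lift of a point
`P` of `E[p]` is some `P + O_k`.
-/

namespace ProjEq

variable {R : Type*} [CommRing R] {A B : R} {P Q T : Pt R}

protected lemma refl (P : Pt R) : ProjEq P P := ⟨1, by simp⟩

protected lemma symm (h : ProjEq P Q) : ProjEq Q P := by
  obtain ⟨u, rfl⟩ := h
  exact ⟨u⁻¹, by simp⟩

protected lemma trans (hPQ : ProjEq P Q) (hQT : ProjEq Q T) : ProjEq P T := by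
  obtain ⟨u, rfl⟩ := hPQ
  obtain ⟨v, rfl⟩ := hQT
  exact ⟨v * u, by simp [mul_assoc]⟩

lemma smul_right {c : R} (hc : IsUnit c) (P : Pt R) : ProjEq P (c • P) := ⟨hc.unit, rfl⟩

lemma of_smul_eq_smul (hP : IsUnit P.2.1) (hQ : IsUnit Q.2.1) (h : Q.2.1 • P = P.2.1 • Q) :
    ProjEq P Q :=
  (smul_right hQ P).trans (h ▸ (smul_right hP Q).symm)

lemma Y_ne_zero (h : ProjEq P Q) (hP : P.2.1 ≠ 0) : Q.2.1 ≠ 0 := by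
  obtain ⟨u, rfl⟩ := h
  simpa using hP

lemma onCurve (h : ProjEq P Q) (hP : OnCurve A B P) : OnCurve A B Q := by
  obtain ⟨u, rfl⟩ := h
  simp only [OnCurve] at hP ⊢
  linear_combination (u : R) ^ 3 * hP

end ProjEq

section Formulas

variable {R S : Type*} [CommRing R] [CommRing S] (A B : R)

lemma padd_smul_smul (c d : R) (P Q : Pt R) :
    padd A B (c • P) (d • Q) = (c * d) ^ 2 • padd A B P Q := by
  simp only [padd, Prod.smul_fst, Prod.smul_snd, smul_eq_mul, Prod.smul_mk, Prod.mk.injEq]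
  refine ⟨?_, ?_, ?_⟩ <;> ring

lemma padd_comm (P Q : Pt R) : padd A B P Q = padd A B Q P := by
  simp only [padd, Prod.mk.injEq]
  refine ⟨?_, ?_, ?_⟩ <;> ring

lemma padd_origin (P : Pt R) : padd A B P (0, 1, 0) = P.2.1 • P := by
  ext <;> simp only [padd, Prod.smul_fst, Prod.smul_snd, smul_eq_mul] <;> ring

lemma pmul_zero (P : Pt R) : pmul A B 0 P = (0, 1, 0) := rfl

lemma pmul_succ (n : ℕ) (P : Pt R) : pmul A B (n + 1) P = padd A B (pmul A B n P) P :=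
  Function.iterate_succ_apply' _ _ _

variable {A B} in
lemma ne_zero_of_projEq_pmul [Nontrivial R] {n : ℕ} (hn : n ≠ 0) {P : Pt R}
    (h : ProjEq (pmul A B n P) (0, 1, 0)) : P ≠ 0 := by
  rintro rfl
  obtain ⟨m, rfl⟩ := Nat.exists_eq_succ_of_ne_zero hn
  obtain ⟨u, hu⟩ := h
  simp [pmul_succ, padd] at hu

variable {A B} in
lemma ProjEq.padd {P P' Q Q' : Pt R} (hP : ProjEq P P') (hQ : ProjEq Q Q') :
    ProjEq (padd A B P Q) (padd A B P' Q') := by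
  obtain ⟨u, rfl⟩ := hP
  obtain ⟨v, rfl⟩ := hQ
  exact ⟨(u * v) ^ 2, padd_smul_smul A B u v P Q⟩

variable {A B} in
lemma ProjEq.pmul {P Q : Pt R} (h : ProjEq P Q) (n : ℕ) :
    ProjEq (pmul A B n P) (pmul A B n Q) := by
  induction n with
  | zero => exact .refl _
  | succ n ih => simpa only [pmul_succ] using ih.padd h

/-- The image of a coordinate triple under a ring homomorphism. -/
def mapPt (φ : R →+* S) (P : Pt R) : Pt S := (φ P.1, φ P.2.1, φ P.2.2)

variable (φ : R →+* S)

lemma mapPt_origin : mapPt φ (0, 1, 0) = (0, 1, 0) := by simp [mapPt]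

lemma mapPt_padd (P Q : Pt R) :
    mapPt φ (padd A B P Q) = padd (φ A) (φ B) (mapPt φ P) (mapPt φ Q) := by
  simp [mapPt, padd, map_ofNat φ 3]

lemma mapPt_pmul (n : ℕ) (P : Pt R) :
    mapPt φ (pmul A B n P) = pmul (φ A) (φ B) n (mapPt φ P) := by
  induction n with
  | zero => simp only [pmul_zero, mapPt_origin]
  | succ n ih => simp only [pmul_succ, mapPt_padd, ih]

variable {A B φ}

lemma ProjEq.mapPt {P Q : Pt R} (h : ProjEq P Q) : ProjEq (mapPt φ P) (mapPt φ Q) := by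
  obtain ⟨u, rfl⟩ := h
  exact ⟨Units.map (φ : R →* S) u, by simp [_root_.mapPt]⟩

lemma OnCurve.mapPt {P : Pt R} (h : OnCurve A B P) : OnCurve (φ A) (φ B) (mapPt φ P) := by
  simpa [OnCurve, _root_.mapPt] using congrArg φ h

end Formulas

section GroupLaw

open WeierstrassCurve.Affine

variable {K : Type*} [Field K]

/-- The Weierstrass curve `y² = x³ + Ax + B`, whose group of points over a field is provided by
Mathlib. -/
def shortCurve (A B : K) : WeierstrassCurve.Affine K := ⟨0, 0, 0, A, B⟩

variable {A B : K}

instance : (shortCurve A B).IsShortNF := ⟨rfl, rfl, rfl⟩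

lemma shortCurve_equation {x y : K} :
    (shortCurve A B).Equation x y ↔ y ^ 2 = x ^ 3 + A * x + B := by
  simp [equation_iff, shortCurve]

lemma shortCurve_negY (x y : K) : (shortCurve A B).negY x y = -y := by
  simp [shortCurve]

lemma shortCurve_nonsingular [NeZero (2 : K)] (hD : 4 * A ^ 3 + 27 * B ^ 2 ≠ 0) {x y : K}
    (h : y ^ 2 = x ^ 3 + A * x + B) : (shortCurve A B).Nonsingular x y := by
  refine (equation_iff_nonsingular_of_Δ_ne_zero ?_).1 (shortCurve_equation.2 h)
  have h16 : (-16 : K) ≠ 0 := by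
    rw [show (-16 : K) = -2 ^ 4 by norm_num]
    exact neg_ne_zero.2 (pow_ne_zero 4 two_ne_zero)
  rw [WeierstrassCurve.Δ_of_isShortNF]
  exact mul_ne_zero h16 hD

/-- The normalized projective coordinates of a point. -/
def coords : (shortCurve A B).Point → Pt K
  | .zero => (0, 1, 0)
  | .some x y _ => (x, y, 1)

lemma coords_zero : coords (0 : (shortCurve A B).Point) = (0, 1, 0) := rfl

lemma coords_some {x y : K} (h : (shortCurve A B).Nonsingular x y) :
    coords (.some x y h) = (x, y, 1) := rfl

lemma coords_onCurve (a : (shortCurve A B).Point) : OnCurve A B (coords a) := by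
  obtain _ | ⟨x, y, h⟩ := a
  · simp [coords, OnCurve]
  · simpa [coords, OnCurve] using shortCurve_equation.1 h.1

lemma ProjEq.eq_of_coords {a b : (shortCurve A B).Point} (h : ProjEq (coords a) (coords b)) :
    a = b := by
  obtain ⟨u, hu⟩ := h
  obtain _ | ⟨x, y, ha⟩ := a <;> obtain _ | ⟨x', y', hb⟩ := b <;>
    simp only [coords, Prod.mk.injEq, mul_one, mul_zero] at hu
  · rfl
  · exact absurd hu.2.2 one_ne_zero
  · exact absurd hu.2.2.symm u.ne_zero
  · obtain ⟨rfl, rfl, hu⟩ := hu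
    simp [← hu]

lemma exists_projEq_coords [NeZero (2 : K)] (hD : 4 * A ^ 3 + 27 * B ^ 2 ≠ 0) {P : Pt K}
    (hP : OnCurve A B P) (h0 : P ≠ 0) : ∃ a : (shortCurve A B).Point, ProjEq (coords a) P := by
  obtain ⟨X, Y, Z⟩ := P
  simp only [OnCurve] at hP
  by_cases hZ : Z = 0
  · obtain rfl : X = 0 := by simpa [hZ] using hP.symm
    have hY : Y ≠ 0 := fun hY => h0 (by simp [hY, hZ])
    exact ⟨0, .mk0 Y hY, by simp [coords_zero, hZ]⟩
  · have hns : (shortCurve A B).Nonsingular (X / Z) (Y / Z) :=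
      shortCurve_nonsingular hD (by field_simp; linear_combination hP)
    exact ⟨.some _ _ hns, .mk0 Z hZ, by simp [coords_some, mul_div_cancel₀, hZ]⟩

lemma coords_add_of_X_ne {x₁ y₁ x₂ y₂ l : K} (h₁ : (shortCurve A B).Nonsingular x₁ y₁)
    (h₂ : (shortCurve A B).Nonsingular x₂ y₂) (hx : x₁ ≠ x₂) (hl : l * (x₁ - x₂) = y₁ - y₂) :
    coords (.some x₁ y₁ h₁ + .some x₂ y₂ h₂) =
      (l ^ 2 - x₁ - x₂, -(l * (l ^ 2 - 2 * x₁ - x₂) + y₁), 1) := by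
  obtain rfl : (shortCurve A B).slope x₁ x₂ y₁ y₂ = l := by
    rw [slope_of_X_ne hx, div_eq_iff (sub_ne_zero.2 hx), hl]
  rw [Point.add_of_X_ne hx, coords_some]
  simp only [shortCurve, addX, addY, negAddY, negY, Prod.mk.injEq]
  refine ⟨?_, ?_, trivial⟩ <;> ring

lemma coords_sub_of_X_ne {x₁ y₁ x₂ y₂ l : K} (h₁ : (shortCurve A B).Nonsingular x₁ y₁)
    (h₂ : (shortCurve A B).Nonsingular x₂ y₂) (hx : x₁ ≠ x₂) (hl : l * (x₁ - x₂) = y₁ + y₂) :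
    coords (.some x₁ y₁ h₁ - .some x₂ y₂ h₂) =
      (l ^ 2 - x₁ - x₂, -(l * (l ^ 2 - 2 * x₁ - x₂) + y₁), 1) := by
  rw [sub_eq_add_neg (Point.some x₁ y₁ h₁), Point.neg_some]
  exact coords_add_of_X_ne h₁ _ hx (by rw [hl, shortCurve_negY, sub_neg_eq_add])

lemma coords_add_self [NeZero (2 : K)] {x y l : K} (h : (shortCurve A B).Nonsingular x y)
    (hy : y ≠ 0) (hl : l * (2 * y) = 3 * x ^ 2 + A) :
    coords (.some x y h + .some x y h) =
      (l ^ 2 - 2 * x, -(l * (l ^ 2 - 3 * x) + y), 1) := by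
  have h2y : y - -y ≠ 0 := by simpa [sub_neg_eq_add, ← two_mul, two_ne_zero] using hy
  have hne : y ≠ (shortCurve A B).negY x y := by rwa [shortCurve_negY, ← sub_ne_zero]
  obtain rfl : (shortCurve A B).slope x x y y = l := by
    rw [slope_of_Y_ne rfl hne, shortCurve_negY, div_eq_iff h2y]
    simp only [shortCurve]
    linear_combination -hl
  rw [Point.add_self_of_Y_ne hne, coords_some]
  simp only [shortCurve, addX, addY, negAddY, negY, Prod.mk.injEq]
  refine ⟨?_, ?_, trivial⟩ <;> ring

lemma add_self_eq_zero_of_coords_Y_eq_zero {a : (shortCurve A B).Point}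
    (h : (coords a).2.1 = 0) : a + a = 0 := by
  obtain _ | ⟨x, y, ha⟩ := a
  · exact absurd h one_ne_zero
  · obtain rfl : y = 0 := h
    exact Point.add_self_of_Y_eq (by simp)

lemma gradient_ne_zero_of_Y_eq_zero {x : K} (h : (shortCurve A B).Nonsingular x 0) :
    3 * x ^ 2 + A ≠ 0 := by
  simpa [shortCurve, eq_comm] using ((nonsingular_iff _ _).1 h).2

lemma padd_coords_of_X_ne {x₁ y₁ x₂ y₂ : K} (h₁ : (shortCurve A B).Nonsingular x₁ y₁)
    (h₂ : (shortCurve A B).Nonsingular x₂ y₂) (hx : x₁ ≠ x₂) :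
    padd A B (x₁, y₁, 1) (x₂, y₂, 1) =
      ((x₂ - x₁) ^ 3 * (coords (.some x₁ y₁ h₁ - .some x₂ y₂ h₂)).2.1) •
        coords (.some x₁ y₁ h₁ + .some x₂ y₂ h₂) := by
  have e₁ := shortCurve_equation.1 h₁.1
  have e₂ := shortCurve_equation.1 h₂.1
  have hd : x₁ - x₂ ≠ 0 := sub_ne_zero.2 hx
  obtain ⟨l, hl⟩ : ∃ l, l * (x₁ - x₂) = y₁ - y₂ := ⟨_, div_mul_cancel₀ _ hd⟩
  obtain ⟨m, hm⟩ : ∃ m, m * (x₁ - x₂) = y₁ + y₂ := ⟨_, div_mul_cancel₀ _ hd⟩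
  rw [coords_add_of_X_ne h₁ h₂ hx hl, coords_sub_of_X_ne h₁ h₂ hx hm]
  simp only [padd, Prod.smul_mk, smul_eq_mul, Prod.mk.injEq]
  refine ⟨?_, ?_, ?_⟩ <;> grind

lemma padd_coords_self [NeZero (2 : K)] {x y : K} (h : (shortCurve A B).Nonsingular x y)
    (hy : y ≠ 0) : padd A B (x, y, 1) (x, y, 1) =
      (2 * y) ^ 3 • coords (.some x y h + .some x y h) := by
  have e := shortCurve_equation.1 h.1
  obtain ⟨l, hl⟩ : ∃ l, l * (2 * y) = 3 * x ^ 2 + A :=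
    ⟨_, div_mul_cancel₀ _ (mul_ne_zero two_ne_zero hy)⟩
  rw [coords_add_self h hy hl]
  simp only [padd, Prod.smul_mk, smul_eq_mul, Prod.mk.injEq]
  refine ⟨?_, ?_, ?_⟩ <;> grind

lemma padd_coords_neg [NeZero (2 : K)] {x y : K} (h : (shortCurve A B).Nonsingular x y)
    (hy : y ≠ 0) : padd A B (x, y, 1) (x, -y, 1) =
      ((2 * y) ^ 3 * (coords (.some x y h + .some x y h)).2.1) • (0, 1, 0) := by
  have e := shortCurve_equation.1 h.1
  obtain ⟨l, hl⟩ : ∃ l, l * (2 * y) = 3 * x ^ 2 + A :=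
    ⟨_, div_mul_cancel₀ _ (mul_ne_zero two_ne_zero hy)⟩
  rw [coords_add_self h hy hl]
  simp only [padd, Prod.smul_mk, smul_eq_mul, Prod.mk.injEq]
  refine ⟨?_, ?_, ?_⟩ <;> grind

lemma padd_coords_self_of_Y_eq_zero {x : K} (h : (shortCurve A B).Nonsingular x 0) :
    padd A B (x, 0, 1) (x, 0, 1) = (-(3 * x ^ 2 + A) ^ 3) • (0, 1, 0) := by
  have e := shortCurve_equation.1 h.1
  simp only [padd, Prod.smul_mk, smul_eq_mul, Prod.mk.injEq]
  refine ⟨?_, ?_, ?_⟩ <;> grind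

lemma exists_padd_coords_some [NeZero (2 : K)] {x₁ y₁ x₂ y₂ : K}
    (h₁ : (shortCurve A B).Nonsingular x₁ y₁) (h₂ : (shortCurve A B).Nonsingular x₂ y₂) :
    ∃ d : K, d ≠ 0 ∧ padd A B (x₁, y₁, 1) (x₂, y₂, 1) =
      (d * (coords (.some x₁ y₁ h₁ - .some x₂ y₂ h₂)).2.1) •
        coords (.some x₁ y₁ h₁ + .some x₂ y₂ h₂) := by
  obtain hx | rfl := ne_or_eq x₁ x₂
  · exact ⟨_, pow_ne_zero 3 (sub_ne_zero.2 hx.symm), padd_coords_of_X_ne h₁ h₂ hx⟩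
  have hy : y₂ = y₁ ∨ y₂ = -y₁ := by
    rw [← sq_eq_sq_iff_eq_or_eq_neg, shortCurve_equation.1 h₁.1, shortCurve_equation.1 h₂.1]
  obtain rfl | hy₁ := eq_or_ne y₁ 0
  · obtain rfl : y₂ = 0 := by simpa using hy
    refine ⟨_, neg_ne_zero.2 (pow_ne_zero 3 (gradient_ne_zero_of_Y_eq_zero h₁)), ?_⟩
    rw [padd_coords_self_of_Y_eq_zero h₁, sub_self, add_self_eq_zero_of_coords_Y_eq_zero rfl,
      coords_zero, mul_one]
  refine ⟨(2 * y₁) ^ 3, pow_ne_zero 3 (mul_ne_zero two_ne_zero hy₁), ?_⟩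
  obtain rfl | rfl := hy
  · rw [padd_coords_self h₁ hy₁, sub_self, coords_zero, mul_one]
  · have hneg : Point.some x₁ (-y₁) h₂ = -Point.some x₁ y₁ h₁ := by
      simp only [Point.neg_some, shortCurve_negY]
    rw [padd_coords_neg h₁ hy₁, hneg, sub_neg_eq_add, add_neg_cancel, coords_zero]

lemma coords_neg_Y (a : (shortCurve A B).Point) (ha : a ≠ 0) :
    (coords (-a)).2.1 = -(coords a).2.1 := by
  obtain _ | ⟨x, y, h⟩ := a
  · exact absurd rfl ha
  · rw [Point.neg_some]
    exact shortCurve_negY x y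

/-- The scalar vanishes exactly when `a - b` has order two. -/
lemma exists_padd_coords [NeZero (2 : K)] (a b : (shortCurve A B).Point) :
    ∃ d : K, d ≠ 0 ∧
      padd A B (coords a) (coords b) = (d * (coords (a - b)).2.1) • coords (a + b) := by
  obtain rfl | hb := eq_or_ne b 0
  · exact ⟨1, one_ne_zero, by rw [coords_zero, padd_origin, sub_zero, add_zero, one_mul]⟩
  obtain rfl | ha := eq_or_ne a 0
  · refine ⟨-1, neg_ne_zero.2 one_ne_zero, ?_⟩
    rw [coords_zero, padd_comm, padd_origin, zero_sub, zero_add, coords_neg_Y b hb, neg_one_mul,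
      neg_neg]
  obtain _ | ⟨x₁, y₁, h₁⟩ := a
  · exact absurd rfl ha
  obtain _ | ⟨x₂, y₂, h₂⟩ := b
  · exact absurd rfl hb
  exact exists_padd_coords_some h₁ h₂

lemma coords_Y_ne_zero {m : ℕ} (hm : Odd m) {a : (shortCurve A B).Point} (ha : m • a = 0) :
    (coords a).2.1 ≠ 0 := by
  intro hY
  have h2a : 2 • a = 0 := by rw [two_nsmul, add_self_eq_zero_of_coords_Y_eq_zero hY]
  obtain ⟨j, rfl⟩ := hm
  obtain rfl : a = 0 := by rwa [add_nsmul, mul_nsmul, h2a, nsmul_zero, zero_add, one_nsmul] at ha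
  exact one_ne_zero hY

lemma projEq_padd_coords [NeZero (2 : K)] {m : ℕ} (hm : Odd m) {a b : (shortCurve A B).Point}
    (ha : m • a = 0) (hb : m • b = 0) :
    ProjEq (coords (a + b)) (padd A B (coords a) (coords b)) := by
  obtain ⟨d, hd, h⟩ := exists_padd_coords a b
  have hY := coords_Y_ne_zero hm (a := a - b) (by rw [nsmul_sub, ha, hb, sub_zero])
  rw [h]
  exact .smul_right (mul_ne_zero hd hY).isUnit _

lemma projEq_pmul_coords [NeZero (2 : K)] {m : ℕ} (hm : Odd m) {a : (shortCurve A B).Point}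
    (ha : m • a = 0) (n : ℕ) : ProjEq (coords (n • a)) (pmul A B n (coords a)) := by
  induction n with
  | zero => rw [zero_nsmul, coords_zero, pmul_zero]; exact .refl _
  | succ n ih =>
    rw [pmul_succ, succ_nsmul]
    exact (projEq_padd_coords hm (by rw [nsmul_left_comm, ha, nsmul_zero]) ha).trans
      (ih.padd (.refl _))

lemma exists_pmul_coords [NeZero (2 : K)] (n : ℕ) (a : (shortCurve A B).Point) :
    ∃ c : K, pmul A B n (coords a) = c • coords (n • a) := by
  induction n with
  | zero => exact ⟨1, by rw [zero_nsmul, coords_zero, pmul_zero, one_smul]⟩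
  | succ n ih =>
    obtain ⟨c, hc⟩ := ih
    obtain ⟨d, -, hd⟩ := exists_padd_coords (n • a) a
    have hpadd := padd_smul_smul A B c 1 (coords (n • a)) (coords a)
    rw [one_smul, hd, smul_smul] at hpadd
    exact ⟨_, by rw [pmul_succ, hc, hpadd, succ_nsmul]⟩

lemma nsmul_eq_zero_of_projEq_pmul [NeZero (2 : K)] {n : ℕ} {a : (shortCurve A B).Point}
    (h : ProjEq (pmul A B n (coords a)) (0, 1, 0)) : n • a = 0 := by
  obtain ⟨c, hc⟩ := exists_pmul_coords n a
  have hc0 : c ≠ 0 := by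
    rintro rfl
    obtain ⟨u, hu⟩ := h
    simp [hc] at hu
  rw [hc, ← coords_zero (A := A) (B := B)] at h
  exact ((ProjEq.smul_right hc0.isUnit _).trans h).eq_of_coords

lemma exists_projEq_coords_of_projEq_pmul [NeZero (2 : K)] (hD : 4 * A ^ 3 + 27 * B ^ 2 ≠ 0)
    {n : ℕ} (hn : n ≠ 0) {P : Pt K} (hP : OnCurve A B P)
    (hPn : ProjEq (pmul A B n P) (0, 1, 0)) :
    ∃ a : (shortCurve A B).Point, n • a = 0 ∧ ProjEq (coords a) P := by
  obtain ⟨a, ha⟩ := exists_projEq_coords hD hP (ne_zero_of_projEq_pmul hn hPn)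
  exact ⟨a, nsmul_eq_zero_of_projEq_pmul ((ha.pmul n).trans hPn), ha⟩

lemma exists_zmod_hom_of_generator [NeZero (2 : K)] (hD : 4 * A ^ 3 + 27 * B ^ 2 ≠ 0) {p : ℕ}
    [Fact p.Prime] (hp : Odd p) {G : Pt K} (hG : OnCurve A B G)
    (hGne : ¬ ProjEq G (0, 1, 0)) (hGtor : ProjEq (pmul A B p G) (0, 1, 0))
    (hGgen : ∀ P : Pt K, OnCurve A B P → (P.1 ≠ 0 ∨ P.2.1 ≠ 0 ∨ P.2.2 ≠ 0) →
      ProjEq (pmul A B p P) (0, 1, 0) → ∃ n : ℕ, ProjEq (pmul A B n G) P) :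
    ∃ φ : ZMod p →+ (shortCurve A B).Point, Function.Injective φ ∧ (∀ n, p • φ n = 0) ∧
      (∀ n, ProjEq (coords (φ n)) (pmul A B n.val G)) ∧ ∀ a, p • a = 0 → ∃ n, φ n = a := by
  obtain ⟨g, hpg, hg⟩ :=
    exists_projEq_coords_of_projEq_pmul hD (Fact.out : p.Prime).ne_zero hG hGtor
  have hg0 : g ≠ 0 := by
    rintro rfl
    exact hGne hg.symm
  have hpmul (n : ℕ) : ProjEq (coords (n • g)) (pmul A B n G) :=
    (projEq_pmul_coords hp hpg n).trans (hg.pmul n)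
  let φ : ZMod p →+ (shortCurve A B).Point :=
    ZMod.lift p ⟨zmultiplesHom _ g, by simpa using hpg⟩
  have hφ (n : ℕ) : φ n = n • g := by
    simpa using ZMod.lift_coe p ⟨zmultiplesHom _ g, by simpa using hpg⟩ (n : ℤ)
  have hφval (n : ZMod p) : φ n = n.val • g := by rw [← hφ, ZMod.natCast_zmod_val]
  refine ⟨φ, ?_, fun n => ?_, fun n => hφval n ▸ hpmul _, fun a ha => ?_⟩
  · have horder : addOrderOf g = p := addOrderOf_eq_prime hpg hg0
    refine (injective_iff_map_eq_zero φ).2 fun n hn => ?_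
    rw [hφval, ← addOrderOf_dvd_iff_nsmul_eq_zero, horder] at hn
    rw [← ZMod.natCast_zmod_val n, (ZMod.natCast_eq_zero_iff _ _).2 hn]
  · rw [hφval, nsmul_left_comm, hpg, nsmul_zero]
  · have hcoords : ProjEq (pmul A B p (coords a)) (0, 1, 0) := by
      simpa only [ha, coords_zero] using (projEq_pmul_coords hp ha p).symm
    obtain ⟨n, hn⟩ := hGgen (coords a) (coords_onCurve a)
      (.inr (.inl (coords_Y_ne_zero hp ha))) hcoords
    exact ⟨n, ((hφ n ▸ hpmul n).trans hn).eq_of_coords⟩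

end GroupLaw

section InvariantField

variable {R : Type*} [CommRing R] {A B : R}

/-- The vector field `(∂F/∂Z, 0, -∂F/∂X)` on the curve `F = Y²Z - X³ - AXZ² - BZ³ = 0`, dual to
the invariant differential; moving a point infinitesimally along it is adding a point at infinity
of the dual numbers. -/
def invariantField (A B : R) (P : Pt R) : Pt R :=
  (P.2.1 ^ 2 - 2 * A * P.1 * P.2.2 - 3 * B * P.2.2 ^ 2, 0, 3 * P.1 ^ 2 + A * P.2.2 ^ 2)

lemma invariantField_ne_zero [IsDomain R] [NeZero (2 : R)] {P : Pt R} (hP : OnCurve A B P)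
    (hY : P.2.1 ≠ 0) : invariantField A B P ≠ 0 := by
  obtain ⟨X, Y, Z⟩ := P
  simp only [OnCurve, invariantField, ne_eq, Prod.ext_iff, Prod.fst_zero, Prod.snd_zero] at *
  rintro ⟨hFZ, -, hFX⟩
  have hYZ : 2 * (Y ^ 2 * Z) = 0 := by linear_combination 3 * hP - Z * hFZ + X * hFX
  obtain rfl : Z = 0 := by simpa [two_ne_zero, hY] using hYZ
  exact hY (by simpa using hFZ)

variable (A B) in
/-- The derivative of `padd A B · Q` at `P` in the direction `V`: since the addition law is
quadratic in each argument, its derivative is its polarization. -/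
def paddDeriv (P V Q : Pt R) : Pt R := QuadraticMap.polar (padd A B · Q) P V

lemma paddDeriv_smul (c d e : R) (P V Q : Pt R) :
    paddDeriv A B (c • P) (e • V) (d • Q) = (c * e * d ^ 2) • paddDeriv A B P V Q := by
  ext <;> simp [paddDeriv, QuadraticMap.polar, padd] <;> ring

set_option maxHeartbeats 4000000 in
-- each coordinate is a membership, of bidegree (5, 4), in the ideal of the two curve equations
/-- Translation by `Q` preserves the invariant vector field. The identity is one of tangent vectors
at `S = P + Q`, which are only defined up to a multiple of `S`, and `P.2.1` accounts for the
scaling of the two fields. -/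
lemma paddDeriv_invariantField {P Q : Pt R} (hP : OnCurve A B P) (hQ : OnCurve A B Q) :
    (padd A B P Q).2.1 • paddDeriv A B P (invariantField A B P) Q -
        (paddDeriv A B P (invariantField A B P) Q).2.1 • padd A B P Q =
      P.2.1 • invariantField A B (padd A B P Q) := by
  obtain ⟨x₁, y₁, z₁⟩ := P
  obtain ⟨x₂, y₂, z₂⟩ := Q
  simp only [OnCurve, paddDeriv, QuadraticMap.polar, padd, invariantField, Prod.mk_add_mk,
    Prod.mk_sub_mk, Prod.smul_mk, smul_eq_mul, Prod.mk.injEq] at *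
  refine ⟨?_, ?_, ?_⟩ <;> grind

end InvariantField

section DualNumbers

section CommRing

variable {R : Type*} [CommRing R] {A B : R}

/-- The point `P + εV` over the dual numbers: the tangent vector `V` at `P`. -/
def dualPt (P V : Pt R) : Pt (DualNumber R) :=
  (.inl P.1 + .inr V.1, .inl P.2.1 + .inr V.2.1, .inl P.2.2 + .inr V.2.2)

lemma exists_eq_dualPt (P : Pt (DualNumber R)) : ∃ P₀ V, P = dualPt P₀ V :=
  ⟨(P.1.fst, P.2.1.fst, P.2.2.fst), (P.1.snd, P.2.1.snd, P.2.2.snd), by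
    simp only [dualPt, TrivSqZeroExt.inl_fst_add_inr_snd_eq]⟩

lemma dualPt_inj {P V Q W : Pt R} : dualPt P V = dualPt Q W ↔ P = Q ∧ V = W := by
  simp only [dualPt, Prod.ext_iff, TrivSqZeroExt.ext_iff, TrivSqZeroExt.fst_add,
    TrivSqZeroExt.fst_inl, TrivSqZeroExt.fst_inr, TrivSqZeroExt.snd_add, TrivSqZeroExt.snd_inl,
    TrivSqZeroExt.snd_inr, add_zero, zero_add]
  tauto

lemma dualPt_Y (P V : Pt R) : (dualPt P V).2.1 = .inl P.2.1 + .inr V.2.1 := rfl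

lemma smul_dualPt (c d : R) (P V : Pt R) :
    (.inl c + .inr d : DualNumber R) • dualPt P V = dualPt (c • P) (c • V + d • P) := by
  ext <;> simp [dualPt]

lemma padd_dualPt (P V Q W : Pt R) :
    padd (ιD A) (ιD B) (dualPt P V) (dualPt Q W) =
      dualPt (padd A B P Q) (paddDeriv A B P V Q + paddDeriv A B Q W P) := by
  have h3 : (3 : DualNumber R) = .inl 3 := rfl
  ext <;> simp [dualPt, padd, paddDeriv, QuadraticMap.polar, h3, pow_two] <;> ring

lemma onCurve_dualPt {P V : Pt R} :
    OnCurve (ιD A) (ιD B) (dualPt P V) ↔ OnCurve A B P ∧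
      2 * P.2.1 * P.2.2 * V.2.1 + (invariantField A B P).1 * V.2.2 =
        (invariantField A B P).2.2 * V.1 := by
  simp only [OnCurve, TrivSqZeroExt.ext_iff]
  refine and_congr (by simp [dualPt]) ?_
  simp only [dualPt, invariantField, pow_succ, pow_zero, one_mul, TrivSqZeroExt.fst_add,
    TrivSqZeroExt.fst_mul, TrivSqZeroExt.fst_inl, TrivSqZeroExt.fst_inr, TrivSqZeroExt.snd_add,
    TrivSqZeroExt.snd_mul, TrivSqZeroExt.snd_inl, TrivSqZeroExt.snd_inr, add_zero, zero_add,
    smul_eq_mul, MulOpposite.smul_eq_mul_unop, MulOpposite.unop_op, MulOpposite.unop_mul,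
    MulOpposite.op_mul, smul_zero]
  constructor <;> intro h <;> linear_combination h

lemma invariantField_Y (P : Pt R) : (invariantField A B P).2.1 = 0 := rfl

variable (R) in
/-- The reduction `R[ε] → R` modulo `ε`. -/
abbrev reduction : DualNumber R →+* R := (TrivSqZeroExt.fstHom R R R).toRingHom

lemma reduction_inl (a : R) : reduction R (ιD a) = a := rfl

lemma mapPt_reduction_dualPt (P V : Pt R) :
    mapPt (reduction R) (dualPt P V) = P := by
  simp [mapPt, dualPt]

variable (A B) in
/-- The sum `P + O_k` of a point and a point at infinity. -/
def addOinf (k : R) (P : Pt R) : Pt (DualNumber R) :=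
  padd (ιD A) (ιD B) (mapPt (TrivSqZeroExt.inlHom R R) P) (Oinf k)

lemma addOinf_eq_dualPt (k : R) (P : Pt R) :
    addOinf A B k P = dualPt (P.2.1 • P) (k • invariantField A B P) := by
  have h3 : (3 : DualNumber R) = .inl 3 := rfl
  ext <;> simp [addOinf, dualPt, padd, invariantField, mapPt, Oinf, h3, pow_two] <;> ring

lemma addOinf_pmul (k : R) (n : ℕ) (P : Pt R) :
    addOinf A B k (pmul A B n P) =
      padd (ιD A) (ιD B) (pmul (ιD A) (ιD B) n (ιD P.1, ιD P.2.1, ιD P.2.2)) (Oinf k) := by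
  rw [addOinf, mapPt_pmul]
  rfl

lemma ProjEq.addOinf {P Q : Pt R} (h : ProjEq P Q) (k : R) :
    ProjEq (addOinf A B k P) (addOinf A B k Q) :=
  h.mapPt.padd (.refl _)

variable {P Q : Pt R}

lemma isUnit_dualPt_Y {V : Pt R} : IsUnit (dualPt P V).2.1 ↔ IsUnit P.2.1 := by
  simp [dualPt, TrivSqZeroExt.isUnit_iff_isUnit_fst]

lemma projEq_dualPt {V W : Pt R} (hP : IsUnit P.2.1) (hQ : IsUnit Q.2.1)
    (h : Q.2.1 • P = P.2.1 • Q) (hVW : Q.2.1 • V + W.2.1 • P = P.2.1 • W + V.2.1 • Q) :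
    ProjEq (dualPt P V) (dualPt Q W) := by
  refine .of_smul_eq_smul (isUnit_dualPt_Y.2 hP) (isUnit_dualPt_Y.2 hQ) ?_
  rw [dualPt_Y, dualPt_Y, smul_dualPt, smul_dualPt, h, hVW]

lemma addOinf_zero_origin : addOinf A B 0 ((0, 1, 0) : Pt R) = (0, 1, 0) := by
  simp [addOinf_eq_dualPt, dualPt]

lemma onCurve_addOinf (hP : OnCurve A B P) (k : R) :
    OnCurve (ιD A) (ιD B) (addOinf A B k P) := by
  rw [addOinf_eq_dualPt, onCurve_dualPt]
  constructor
  · simp only [OnCurve, Prod.smul_fst, Prod.smul_snd, smul_eq_mul] at hP ⊢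
    linear_combination P.2.1 ^ 3 * hP
  · simp only [invariantField, Prod.smul_fst, Prod.smul_snd, smul_eq_mul]
    ring

lemma projEq_mapPt_reduction_addOinf (hY : IsUnit P.2.1) (k : R) :
    ProjEq P (mapPt (reduction R) (addOinf A B k P)) := by
  rw [addOinf_eq_dualPt, mapPt_reduction_dualPt]
  exact .smul_right hY P

lemma projEq_padd_addOinf (hP : OnCurve A B P) (hQ : OnCurve A B Q) (hYP : IsUnit P.2.1)
    (hYQ : IsUnit Q.2.1) (hY : IsUnit (padd A B P Q).2.1) (k l : R) :
    ProjEq (padd (ιD A) (ιD B) (addOinf A B k P) (addOinf A B l Q))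
      (addOinf A B (k + l) (padd A B P Q)) := by
  have hPQ := paddDeriv_invariantField hP hQ
  have hQP := paddDeriv_invariantField hQ hP
  rw [padd_comm A B Q P] at hQP
  have hsum : padd (ιD A) (ιD B) (addOinf A B k P) (addOinf A B l Q) =
      dualPt ((P.2.1 * Q.2.1) ^ 2 • padd A B P Q)
        ((P.2.1 * k * Q.2.1 ^ 2) • paddDeriv A B P (invariantField A B P) Q +
          (Q.2.1 * l * P.2.1 ^ 2) • paddDeriv A B Q (invariantField A B Q) P) := by
    rw [addOinf_eq_dualPt, addOinf_eq_dualPt, padd_dualPt, padd_smul_smul, paddDeriv_smul,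
      paddDeriv_smul]
  rw [hsum, addOinf_eq_dualPt]
  refine projEq_dualPt (((hYP.mul hYQ).pow 2).mul hY) (hY.mul hY) ?_ ?_
  · simp only [Prod.smul_snd, Prod.smul_fst, smul_eq_mul]
    module
  · simp only [Prod.smul_snd, Prod.smul_fst, Prod.snd_add, Prod.fst_add, smul_eq_mul,
      invariantField_Y, mul_zero]
    linear_combination (norm := module) ((padd A B P Q).2.1 * P.2.1 * k * Q.2.1 ^ 2) • hPQ +
      ((padd A B P Q).2.1 * Q.2.1 * l * P.2.1 ^ 2) • hQP

end CommRing

variable {K : Type*} [Field K] {A B : K} {P Q : Pt K}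

lemma eq_of_projEq_addOinf [NeZero (2 : K)] (hP : OnCurve A B P) (hY : P.2.1 ≠ 0) {k l : K}
    (h : ProjEq (addOinf A B k P) (addOinf A B l P)) : k = l := by
  obtain ⟨u, hu⟩ := h
  change _ = (u : DualNumber K) • addOinf A B k P at hu
  rw [addOinf_eq_dualPt, addOinf_eq_dualPt,
    ← TrivSqZeroExt.inl_fst_add_inr_snd_eq (u : DualNumber K), smul_dualPt, dualPt_inj] at hu
  obtain ⟨hfst, hsnd⟩ := hu
  have hu_fst : (u : DualNumber K).fst = 1 := by
    simpa [hY] using congrArg (·.2.1) hfst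
  have hu_snd : (u : DualNumber K).snd = 0 := by
    simpa [invariantField, hY] using congrArg (·.2.1) hsnd
  rw [hu_fst, hu_snd, one_smul, zero_smul, add_zero] at hsnd
  exact (smul_left_injective K (invariantField_ne_zero hP hY) hsnd).symm

lemma exists_mul_eq_and_mul_eq {a b c d : K} (h : a * d = b * c) (h0 : a ≠ 0 ∨ b ≠ 0) :
    ∃ k, k * a = c ∧ k * b = d := by
  obtain ha | hb := h0
  · exact ⟨c / a, div_mul_cancel₀ c ha, by field_simp; linear_combination -h⟩
  · exact ⟨d / b, by field_simp; linear_combination h, div_mul_cancel₀ d hb⟩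

/-- The curve is smooth at `P`, so its tangent directions at `P` are the multiples of the invariant
vector field; the right-hand side is the representative of `V` modulo `P` with vanishing middle
coordinate. -/
lemma exists_smul_invariantField [NeZero (2 : K)] {V : Pt K} (hY : P.2.1 ≠ 0)
    (hPV : OnCurve (ιD A) (ιD B) (dualPt P V)) :
    ∃ k : K, k • invariantField A B P = P.2.1 • V - V.2.1 • P := by
  obtain ⟨hP, htan⟩ := onCurve_dualPt.1 hPV
  have hpar : (invariantField A B P).1 * (P.2.1 * V.2.2 - V.2.1 * P.2.2) =
      (invariantField A B P).2.2 * (P.2.1 * V.1 - V.2.1 * P.1) := by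
    simp only [OnCurve, invariantField] at *
    linear_combination P.2.1 * htan - 3 * V.2.1 * hP
  have hne : (invariantField A B P).1 ≠ 0 ∨ (invariantField A B P).2.2 ≠ 0 := by
    rw [← not_and_or]
    exact fun h => invariantField_ne_zero hP hY (Prod.ext h.1 (Prod.ext rfl h.2))
  obtain ⟨k, hkX, hkZ⟩ := exists_mul_eq_and_mul_eq hpar hne
  refine ⟨k, Prod.ext hkX (Prod.ext ?_ hkZ)⟩
  simp [invariantField, mul_comm]

lemma exists_projEq_addOinf [NeZero (2 : K)] {P : Pt (DualNumber K)} (hP : OnCurve (ιD A) (ιD B) P)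
    (hY : (mapPt (reduction K) P).2.1 ≠ 0) :
    ∃ k, ProjEq (addOinf A B k (mapPt (reduction K) P)) P := by
  obtain ⟨P, V, rfl⟩ := exists_eq_dualPt P
  rw [mapPt_reduction_dualPt] at hY ⊢
  obtain ⟨k, hk⟩ := exists_smul_invariantField hY hP
  refine ⟨k, ?_⟩
  rw [addOinf_eq_dualPt, hk]
  refine projEq_dualPt (hY.isUnit.mul hY.isUnit) hY.isUnit (smul_smul _ _ _) ?_
  simp only [Prod.smul_snd, Prod.smul_fst, Prod.snd_sub, Prod.fst_sub, smul_eq_mul]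
  module

end DualNumbers

section Torsion

variable {K : Type*} [Field K] {A B : K}

lemma projEq_padd_addOinf_coords [NeZero (2 : K)] {m : ℕ} (hm : Odd m)
    {a b : (shortCurve A B).Point} (ha : m • a = 0) (hb : m • b = 0) (k l : K) :
    ProjEq (padd (ιD A) (ιD B) (addOinf A B k (coords a)) (addOinf A B l (coords b)))
      (addOinf A B (k + l) (coords (a + b))) := by
  have hab : m • (a + b) = 0 := by rw [nsmul_add, ha, hb, add_zero]
  have hadd := projEq_padd_coords hm ha hb
  have hY := hadd.Y_ne_zero (coords_Y_ne_zero hm hab)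
  exact (projEq_padd_addOinf (coords_onCurve a) (coords_onCurve b)
    (coords_Y_ne_zero hm ha).isUnit (coords_Y_ne_zero hm hb).isUnit hY.isUnit k l).trans
      (hadd.symm.addOinf _)

lemma projEq_pmul_addOinf_coords [NeZero (2 : K)] {m : ℕ} (hm : Odd m)
    {a : (shortCurve A B).Point} (ha : m • a = 0) (k : K) (n : ℕ) :
    ProjEq (pmul (ιD A) (ιD B) n (addOinf A B k (coords a)))
      (addOinf A B (n * k) (coords (n • a))) := by
  induction n with
  | zero =>
    rw [pmul_zero, Nat.cast_zero, zero_mul, zero_nsmul, coords_zero, addOinf_zero_origin]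
    exact .refl _
  | succ n ih =>
    have hna : m • n • a = 0 := by rw [nsmul_left_comm, ha, nsmul_zero]
    rw [pmul_succ, succ_nsmul, Nat.cast_succ, add_one_mul]
    exact (ih.padd (.refl _)).trans (projEq_padd_addOinf_coords hm hna ha _ _)

lemma projEq_pmul_addOinf_coords_of_cast_eq_zero [NeZero (2 : K)] {p : ℕ} (hp : Odd p)
    (hpK : (p : K) = 0) {a : (shortCurve A B).Point} (ha : p • a = 0) (k : K) :
    ProjEq (pmul (ιD A) (ιD B) p (addOinf A B k (coords a))) (0, 1, 0) := by
  simpa only [ha, hpK, zero_mul, coords_zero, addOinf_zero_origin] using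
    projEq_pmul_addOinf_coords hp ha k p

lemma eq_and_eq_of_projEq_addOinf_coords [NeZero (2 : K)] {m : ℕ} (hm : Odd m)
    {a b : (shortCurve A B).Point} (ha : m • a = 0) (hb : m • b = 0) {k l : K}
    (h : ProjEq (addOinf A B k (coords a)) (addOinf A B l (coords b))) : a = b ∧ k = l := by
  have hYa := coords_Y_ne_zero hm ha
  obtain rfl : a = b := ProjEq.eq_of_coords <|
    ((projEq_mapPt_reduction_addOinf hYa.isUnit k).trans h.mapPt).trans
      (projEq_mapPt_reduction_addOinf (coords_Y_ne_zero hm hb).isUnit l).symm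
  exact ⟨rfl, eq_of_projEq_addOinf (coords_onCurve a) hYa h⟩

lemma exists_projEq_addOinf_coords [NeZero (2 : K)] (hD : 4 * A ^ 3 + 27 * B ^ 2 ≠ 0) {m : ℕ}
    (hm : Odd m) {P : Pt (DualNumber K)} (hP : OnCurve (ιD A) (ιD B) P)
    (hPm : ProjEq (pmul (ιD A) (ιD B) m P) (0, 1, 0)) :
    ∃ (a : (shortCurve A B).Point) (k : K),
      m • a = 0 ∧ ProjEq (addOinf A B k (coords a)) P := by
  have hred : OnCurve A B (mapPt (reduction K) P) := hP.mapPt (φ := reduction K)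
  have hredm : ProjEq (pmul A B m (mapPt (reduction K) P)) (0, 1, 0) := by
    simpa only [mapPt_pmul, mapPt_origin, reduction_inl] using hPm.mapPt (φ := reduction K)
  obtain ⟨a, hma, ha⟩ := exists_projEq_coords_of_projEq_pmul hD hm.pos.ne' hred hredm
  obtain ⟨k, hk⟩ := exists_projEq_addOinf hP (ha.Y_ne_zero (coords_Y_ne_zero hm hma))
  exact ⟨a, k, hma, (ha.addOinf k).trans hk⟩

end Torsion

theorem p_torsion_of_canonical_lift_general (K : Type*) [Field K]
    (p : ℕ) [CharP K p] (hp : 2 < p)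
    (A B : K) (hD : 4 * A ^ 3 + 27 * B ^ 2 ≠ 0)
    (G : Pt K) (hG : OnCurve A B G)
    (hGne : ¬ ProjEq G ((0, 1, 0) : Pt K))
    (hGtor : ProjEq (pmul A B p G) ((0, 1, 0) : Pt K))
    (hGgen : ∀ P : Pt K, OnCurve A B P → (P.1 ≠ 0 ∨ P.2.1 ≠ 0 ∨ P.2.2 ≠ 0) →
      ProjEq (pmul A B p P) ((0, 1, 0) : Pt K) → ∃ n : ℕ, ProjEq (pmul A B n G) P) :
    let f : ZMod p × K → Pt (DualNumber K) := fun a =>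
      padd (ιD A) (ιD B)
        (pmul (ιD A) (ιD B) a.1.val (ιD G.1, ιD G.2.1, ιD G.2.2)) (Oinf a.2)
    (∀ a, OnCurve (ιD A) (ιD B) (f a) ∧
        ProjEq (pmul (ιD A) (ιD B) p (f a)) ((0, 1, 0) : Pt (DualNumber K))) ∧
    (∀ a b, ProjEq (f a) (f b) → a = b) ∧
    (∀ a b, ProjEq (padd (ιD A) (ιD B) (f a) (f b)) (f (a + b))) ∧
    (∀ P : Pt (DualNumber K), OnCurve (ιD A) (ιD B) P →
      (IsUnit P.1 ∨ IsUnit P.2.1 ∨ IsUnit P.2.2) →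
      ProjEq (pmul (ιD A) (ιD B) p P) ((0, 1, 0) : Pt (DualNumber K)) →
      ∃ a, ProjEq (f a) P) := by
  intro f
  have hprime : Fact p.Prime := ⟨(CharP.char_is_prime_or_zero K p).resolve_right (by omega)⟩
  have hodd : Odd p := hprime.out.odd_of_ne_two (by omega)
  have h2 : NeZero (2 : K) := ⟨Ring.two_ne_zero (by rw [ringChar.eq K p]; omega)⟩
  obtain ⟨φ, hφ_inj, hφ_tor, hφ_pmul, hφ_surj⟩ :=
    exists_zmod_hom_of_generator hD hodd hG hGne hGtor hGgen
  have hf (a : ZMod p × K) : ProjEq (addOinf A B a.2 (coords (φ a.1))) (f a) := by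
    have h := (hφ_pmul a.1).addOinf (A := A) (B := B) a.2
    rwa [addOinf_pmul] at h
  refine ⟨fun a => ⟨?_, ?_⟩, fun a b hab => ?_, fun a b => ?_, fun P hP _ hPtor => ?_⟩
  · exact (hf a).onCurve (onCurve_addOinf (coords_onCurve _) _)
  · exact ((hf a).symm.pmul p).trans
      (projEq_pmul_addOinf_coords_of_cast_eq_zero hodd (CharP.cast_eq_zero K p) (hφ_tor _) _)
  · obtain ⟨hfst, hsnd⟩ := eq_and_eq_of_projEq_addOinf_coords hodd (hφ_tor _) (hφ_tor _)
      (((hf a).trans hab).trans (hf b).symm)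
    exact Prod.ext (hφ_inj hfst) hsnd
  · have hadd := projEq_padd_addOinf_coords hodd (hφ_tor a.1) (hφ_tor b.1) a.2 b.2
    rw [← map_add] at hadd
    exact (((hf a).symm.padd (hf b).symm).trans hadd).trans (hf (a + b))
  · obtain ⟨a, k, ha, hP⟩ := exists_projEq_addOinf_coords hD hodd hP hPtor
    obtain ⟨n, rfl⟩ := hφ_surj a ha
    exact ⟨(n, k), (hf _).symm.trans hP⟩

/-- for the canonical lift of an ordinary curve (with `E[p]` cyclic of
order `p`, generated by `G`), the `p`-torsion of `Ẽ(K[ε])` is `E[p] ⊕ Θ`: the map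
`(n, k) ↦ n•G + O_k` from `ℤ/pℤ × K⁺` is a group isomorphism onto the `p`-torsion. -/
theorem p_torsion_of_canonical_lift (K : Type*) [Field K] [IsAlgClosed K]
    (p : ℕ) [CharP K p] (hp : 3 < p)
    (A B : K) (hD : 4 * A ^ 3 + 27 * B ^ 2 ≠ 0)
    (G : Pt K) (hG : OnCurve A B G)
    (hGne : ¬ ProjEq G ((0, 1, 0) : Pt K))
    (hGtor : ProjEq (pmul A B p G) ((0, 1, 0) : Pt K))
    (hGgen : ∀ P : Pt K, OnCurve A B P → (P.1 ≠ 0 ∨ P.2.1 ≠ 0 ∨ P.2.2 ≠ 0) →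
      ProjEq (pmul A B p P) ((0, 1, 0) : Pt K) → ∃ n : ℕ, ProjEq (pmul A B n G) P) :
    let f : ZMod p × K → Pt (DualNumber K) := fun a =>
      padd (ιD A) (ιD B)
        (pmul (ιD A) (ιD B) a.1.val (ιD G.1, ιD G.2.1, ιD G.2.2)) (Oinf a.2)
    (∀ a, OnCurve (ιD A) (ιD B) (f a) ∧
        ProjEq (pmul (ιD A) (ιD B) p (f a)) ((0, 1, 0) : Pt (DualNumber K))) ∧
    (∀ a b, ProjEq (f a) (f b) → a = b) ∧
    (∀ a b, ProjEq (padd (ιD A) (ιD B) (f a) (f b)) (f (a + b))) ∧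
    (∀ P : Pt (DualNumber K), OnCurve (ιD A) (ιD B) P →
      (IsUnit P.1 ∨ IsUnit P.2.1 ∨ IsUnit P.2.2) →
      ProjEq (pmul (ιD A) (ιD B) p P) ((0, 1, 0) : Pt (DualNumber K)) →
      ∃ a, ProjEq (f a) P) :=
  p_torsion_of_canonical_lift_general K p (by omega) A B hD G hG hGne hGtor hGgen
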